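/- arXiv:1108.1878 — 2 statements merged into one kernel-verified Lean document; each statement's English description precedes it below -/
import Mathlib

section
/- Let 0 < c < 1 and μ > 0, and let ζ(t) = c cos t + i μ sin t for t ∈ [−π, π]. Then |ψ_B(−iμ)| ≤ |ψ_B(ζ(t))| ≤ |ψ_B(iμ)| for all t ∈ [−π, π]; the first inequality is an equality if and only if t = −π/2, and the second is an equality if and only if t = π/2. (Explicitly, |ψ_B(−iμ)| = √(μ² + 1) − μ and |ψ_B(iμ)| = √(μ² + 1) + μ.) -/
/-!
The value `z = psiB ζ` is a nonzero solution of `(z + z⁻¹) / 2 = ζ`, that is, of `cosh (log z) = ζ`.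
With `u = log ‖z‖` and `θ = arg z`, the point `ζ = x + iy` has elliptic coordinates
`x = cosh u cos θ`, `y = sinh u sin θ`, so the level curves of `|u|` are the ellipses with foci
`±1`, and `|u| < arsinh μ` inside the confocal ellipse `x² / (1 + μ²) + y² / μ² = 1`. Every point
`ζ(t)` is inside that ellipse, except for the common vertices `±iμ` reached at `t = ±π/2`, where
`‖psiB (±iμ)‖ = exp (± arsinh μ)`.
-/

open Filter Topology

noncomputable section

/-- `ψ_B(ζ) = ζ + i√(1 − ζ²)`, the branch of the square root (principal complex power) being
positive on the positive real axis; holomorphic on `ℂ ∖ {x ∈ ℝ : |x| ≥ 1}`. -/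
def psiB (ζ : ℂ) : ℂ := ζ + Complex.I * (1 - ζ ^ 2) ^ ((1 : ℂ) / 2)

section ConfocalEllipses

/-- The open region bounded by the ellipse with vertices `±a` and `±ib`, for nonzero `a` and `b`.
The region bounded by an ellipse with foci `±1` is obtained for `a = cosh m` and `b = sinh m`. -/
def ellipseInterior (a b : ℝ) : Set ℂ := {ζ | ζ.re ^ 2 / a ^ 2 + ζ.im ^ 2 / b ^ 2 < 1}

lemma cosh_re (z : ℂ) : (Complex.cosh z).re = Real.cosh z.re * Real.cos z.im := by
  rw [← Complex.re_add_im z, Complex.cosh_add, Complex.cosh_mul_I, Complex.sinh_mul_I]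
  simp [← Complex.ofReal_cosh, ← Complex.ofReal_sinh, ← Complex.ofReal_cos, ← Complex.ofReal_sin]

lemma cosh_im (z : ℂ) : (Complex.cosh z).im = Real.sinh z.re * Real.sin z.im := by
  rw [← Complex.re_add_im z, Complex.cosh_add, Complex.cosh_mul_I, Complex.sinh_mul_I]
  simp [← Complex.ofReal_cosh, ← Complex.ofReal_sinh, ← Complex.ofReal_cos, ← Complex.ofReal_sin]

lemma abs_re_lt_of_cosh_mem_ellipseInterior {z : ℂ} {m : ℝ} (hm : 0 < m)
    (hz : Complex.cosh z ∈ ellipseInterior (Real.cosh m) (Real.sinh m)) : |z.re| < m := by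
  by_contra! hle
  have := Real.sinh_pos_iff.mpr hm
  have hcosh : Real.cosh m ^ 2 ≤ Real.cosh z.re ^ 2 := by
    gcongr
    exact Real.cosh_le_cosh.mpr (by rwa [abs_of_pos hm])
  have hsinh : Real.sinh m ^ 2 ≤ Real.sinh z.re ^ 2 := by
    rw [← sq_abs (Real.sinh z.re), Real.abs_sinh]
    gcongr
    exact Real.sinh_le_sinh.mpr hle
  refine (show _ < (1 : ℝ) from hz).not_ge ?_
  calc (1 : ℝ) = Real.cos z.im ^ 2 + Real.sin z.im ^ 2 := (Real.cos_sq_add_sin_sq _).symm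
    _ ≤ Real.cosh z.re ^ 2 / Real.cosh m ^ 2 * Real.cos z.im ^ 2 +
        Real.sinh z.re ^ 2 / Real.sinh m ^ 2 * Real.sin z.im ^ 2 := by
      gcongr
      · exact le_mul_of_one_le_left (sq_nonneg _) ((one_le_div (by positivity)).mpr hcosh)
      · exact le_mul_of_one_le_left (sq_nonneg _) ((one_le_div (by positivity)).mpr hsinh)
    _ = (Complex.cosh z).re ^ 2 / Real.cosh m ^ 2 +
        (Complex.cosh z).im ^ 2 / Real.sinh m ^ 2 := by
      rw [cosh_re, cosh_im]
      ring

lemma cos_add_I_mul_sin_mem_ellipseInterior {a b c t : ℝ} (hc : c ^ 2 < a ^ 2) (hb : b ≠ 0)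
    (ht : Real.cos t ≠ 0) :
    ((c * Real.cos t : ℝ) : ℂ) + Complex.I * ((b * Real.sin t : ℝ) : ℂ) ∈ ellipseInterior a b := by
  have ha : 0 < a ^ 2 := (sq_nonneg c).trans_lt hc
  have hratio : c ^ 2 / a ^ 2 < 1 := (div_lt_one ha).mpr hc
  suffices (c * Real.cos t) ^ 2 / a ^ 2 + (b * Real.sin t) ^ 2 / b ^ 2 < 1 by
    simpa [ellipseInterior, -Complex.ofReal_mul]
  calc (c * Real.cos t) ^ 2 / a ^ 2 + (b * Real.sin t) ^ 2 / b ^ 2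
      = c ^ 2 / a ^ 2 * Real.cos t ^ 2 + Real.sin t ^ 2 := by field_simp
    _ < 1 * Real.cos t ^ 2 + Real.sin t ^ 2 := by gcongr
    _ = 1 := by rw [one_mul, Real.cos_sq_add_sin_sq]

end ConfocalEllipses

section PsiB

lemma psiB_mul_sub_sqrt (ζ : ℂ) :
    psiB ζ * (ζ - Complex.I * (1 - ζ ^ 2) ^ ((1 : ℂ) / 2)) = 1 := by
  have hsq : ((1 - ζ ^ 2) ^ ((1 : ℂ) / 2)) ^ 2 = 1 - ζ ^ 2 := by
    rw [one_div, Complex.cpow_ofNat_inv_pow]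
  rw [psiB]
  linear_combination hsq - ((1 - ζ ^ 2) ^ ((1 : ℂ) / 2)) ^ 2 * Complex.I_sq

lemma psiB_ne_zero (ζ : ℂ) : psiB ζ ≠ 0 :=
  left_ne_zero_of_mul_eq_one (psiB_mul_sub_sqrt ζ)

lemma cosh_log_psiB (ζ : ℂ) : Complex.cosh (Complex.log (psiB ζ)) = ζ := by
  rw [Complex.cosh, Complex.exp_neg, Complex.exp_log (psiB_ne_zero ζ),
    ← eq_inv_of_mul_eq_one_right (psiB_mul_sub_sqrt ζ), psiB]
  ring

lemma norm_psiB_mem_Ioo {ζ : ℂ} {m : ℝ} (hm : 0 < m)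
    (hζ : ζ ∈ ellipseInterior (Real.cosh m) (Real.sinh m)) :
    ‖psiB ζ‖ ∈ Set.Ioo (Real.exp (-m)) (Real.exp m) := by
  have hnorm : 0 < ‖psiB ζ‖ := norm_pos_iff.mpr (psiB_ne_zero ζ)
  have hlog : |Real.log ‖psiB ζ‖| < m := by
    rw [← Complex.log_re]
    exact abs_re_lt_of_cosh_mem_ellipseInterior hm (by rwa [cosh_log_psiB])
  exact ⟨(Real.lt_log_iff_exp_lt hnorm).mp (abs_lt.mp hlog).1,
    (Real.log_lt_iff_lt_exp hnorm).mp (abs_lt.mp hlog).2⟩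

lemma norm_psiB_ellipse_mem_Ioo {c μ t : ℝ} (hc : c ^ 2 < 1 + μ ^ 2) (hμ : 0 < μ)
    (ht : Real.cos t ≠ 0) :
    ‖psiB (((c * Real.cos t : ℝ) : ℂ) + Complex.I * ((μ * Real.sin t : ℝ) : ℂ))‖ ∈
      Set.Ioo (Real.exp (-Real.arsinh μ)) (Real.exp (Real.arsinh μ)) := by
  apply norm_psiB_mem_Ioo (Real.arsinh_pos_iff.mpr hμ)
  rw [Real.sinh_arsinh]
  exact cos_add_I_mul_sin_mem_ellipseInterior (by rwa [Real.cosh_sq', Real.sinh_arsinh]) hμ.ne' ht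

lemma psiB_I_mul (y : ℝ) : psiB (Complex.I * y) = Complex.I * (Real.exp (Real.arsinh y) : ℝ) := by
  have hsqrt : (1 - (Complex.I * y) ^ 2) ^ ((1 : ℂ) / 2) = (√(1 + y ^ 2) : ℝ) := by
    rw [Real.sqrt_eq_rpow, Complex.ofReal_cpow (by positivity), mul_pow, Complex.I_sq]
    push_cast
    ring_nf
  rw [psiB, hsqrt, Real.exp_arsinh]
  push_cast
  ring

lemma norm_psiB_I_mul (y : ℝ) : ‖psiB (Complex.I * y)‖ = Real.exp (Real.arsinh y) := by
  rw [psiB_I_mul, norm_mul, Complex.norm_I, one_mul, Complex.norm_of_nonneg (Real.exp_nonneg _)]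

lemma norm_psiB_neg_I_mul (y : ℝ) : ‖psiB (-(Complex.I * y))‖ = Real.exp (-Real.arsinh y) := by
  rw [← Real.arsinh_neg, ← norm_psiB_I_mul, Complex.ofReal_neg, mul_neg]

end PsiB

lemma eq_pi_div_two_or_eq_neg_of_cos_eq_zero {t : ℝ} (ht : t ∈ Set.Icc (-Real.pi) Real.pi)
    (hcos : Real.cos t = 0) : t = Real.pi / 2 ∨ t = -(Real.pi / 2) := by
  have hpi := Real.pi_pos
  refine eq_or_eq_neg_of_abs_eq (Real.injOn_cos ⟨abs_nonneg t, abs_le.mpr ht⟩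
    ⟨by linarith, by linarith⟩ ?_)
  rw [Real.cos_abs, hcos, Real.cos_pi_div_two]

-- For `1 ≤ |c|` the ellipse meets the branch cut at `±c`, where `psiB` takes a boundary value; the
-- boundary value from the other side is its inverse and satisfies the same bounds.
theorem stmt18_general (c μ : ℝ) (hc : c ^ 2 < 1 + μ ^ 2) (hμ : 0 < μ) :
    ‖psiB (-(Complex.I * (μ : ℂ)))‖ = Real.sqrt (μ ^ 2 + 1) - μ ∧
    ‖psiB (Complex.I * (μ : ℂ))‖ = Real.sqrt (μ ^ 2 + 1) + μ ∧
    ∀ t ∈ Set.Icc (-Real.pi) Real.pi,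
      ‖psiB (-(Complex.I * (μ : ℂ)))‖ ≤
        ‖psiB (((c * Real.cos t : ℝ) : ℂ) + Complex.I * ((μ * Real.sin t : ℝ) : ℂ))‖ ∧
      ‖psiB (((c * Real.cos t : ℝ) : ℂ) + Complex.I * ((μ * Real.sin t : ℝ) : ℂ))‖ ≤
        ‖psiB (Complex.I * (μ : ℂ))‖ ∧
      (‖psiB (((c * Real.cos t : ℝ) : ℂ) + Complex.I * ((μ * Real.sin t : ℝ) : ℂ))‖ =
          ‖psiB (-(Complex.I * (μ : ℂ)))‖ ↔ t = -(Real.pi / 2)) ∧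
      (‖psiB (((c * Real.cos t : ℝ) : ℂ) + Complex.I * ((μ * Real.sin t : ℝ) : ℂ))‖ =
          ‖psiB (Complex.I * (μ : ℂ))‖ ↔ t = Real.pi / 2) := by
  have hends : Real.exp (-Real.arsinh μ) < Real.exp (Real.arsinh μ) :=
    Real.exp_lt_exp.mpr (neg_lt_self (Real.arsinh_pos_iff.mpr hμ))
  have hpi : -(Real.pi / 2) < Real.pi / 2 := by linarith [Real.pi_pos]
  have hbot := norm_psiB_neg_I_mul μ
  have htop := norm_psiB_I_mul μ
  refine ⟨?_, ?_, fun t ht => ?_⟩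
  · rw [hbot, ← Real.arsinh_neg, Real.exp_arsinh, neg_sq]
    ring_nf
  · rw [htop, Real.exp_arsinh]
    ring_nf
  by_cases hcos : Real.cos t = 0
  · rcases eq_pi_div_two_or_eq_neg_of_cos_eq_zero ht hcos with rfl | rfl
    · simp [htop, hbot, hends.le, hends.ne', hpi.ne']
    · simp [htop, hbot, hends.le, hends.ne, hpi.ne]
  · obtain ⟨hlower, hupper⟩ := norm_psiB_ellipse_mem_Ioo hc hμ hcos
    rw [hbot, htop]
    refine ⟨hlower.le, hupper.le, iff_of_false hlower.ne' ?_, iff_of_false hupper.ne ?_⟩ <;>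
    · rintro rfl
      simp at hcos

/-- Lemma `ellipseB`: for `0 < c < 1`, `μ > 0` and the ellipse
`ζ(t) = c cos t + iμ sin t`, one has `|ψ_B(−iμ)| ≤ |ψ_B(ζ(t))| ≤ |ψ_B(iμ)|` on `[−π,π]`,
with equality on the left iff `t = −π/2` and on the right iff `t = π/2`; moreover
`|ψ_B(−iμ)| = √(μ²+1) − μ` and `|ψ_B(iμ)| = √(μ²+1) + μ`. -/
theorem stmt18 (c μ : ℝ) (hc0 : 0 < c) (hc1 : c < 1) (hμ : 0 < μ) :
    ‖psiB (-(Complex.I * (μ : ℂ)))‖ = Real.sqrt (μ ^ 2 + 1) - μ ∧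
    ‖psiB (Complex.I * (μ : ℂ))‖ = Real.sqrt (μ ^ 2 + 1) + μ ∧
    ∀ t ∈ Set.Icc (-Real.pi) Real.pi,
      ‖psiB (-(Complex.I * (μ : ℂ)))‖ ≤
        ‖psiB (((c * Real.cos t : ℝ) : ℂ) + Complex.I * ((μ * Real.sin t : ℝ) : ℂ))‖ ∧
      ‖psiB (((c * Real.cos t : ℝ) : ℂ) + Complex.I * ((μ * Real.sin t : ℝ) : ℂ))‖ ≤
        ‖psiB (Complex.I * (μ : ℂ))‖ ∧
      (‖psiB (((c * Real.cos t : ℝ) : ℂ) + Complex.I * ((μ * Real.sin t : ℝ) : ℂ))‖ =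
          ‖psiB (-(Complex.I * (μ : ℂ)))‖ ↔ t = -(Real.pi / 2)) ∧
      (‖psiB (((c * Real.cos t : ℝ) : ℂ) + Complex.I * ((μ * Real.sin t : ℝ) : ℂ))‖ =
          ‖psiB (Complex.I * (μ : ℂ))‖ ↔ t = Real.pi / 2) :=
  stmt18_general c μ (by nlinarith) hμ
end
end

section
/- The function H_Q is positive on {ξ : |a| < |ξ| < 1}, is convex there (indeed (1/2)H_Q″(ξ) = |b|/((1 − ξ²)√(ξ² − |a|²)) > 0 on |a| < ξ < 1, and H_Q is even), and has no critical points: for |a| < ξ < 1 one has (1/2)H_Q′(ξ) = log r(ξ) > 0 where r(ξ) = (|b|ξ + √(ξ² − |a|²))/(|a|√(1 − ξ²)). Moreover H_Q(ξ) → 0 as |ξ| → |a|⁺ and H_Q(ξ) → −2 log|a| as |ξ| → 1⁻. -/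
/-!
Write `H_Q(ξ) / 2 = ξ log r(ξ) - log D(ξ)` for `|a| < ξ < 1`, as in the paper. The normalization
`|a|² + |b|² = 1` gives the Legendre relation `(log D)' = ξ (log r)'`, so that `H_Q' / 2 = log r`
and `H_Q'' / 2 = (log r)'`, and it also gives `|b| ξ > |a| √(1 - ξ²)`, so that `r > 1`.
The formula for `H_Q` extends continuously to `ξ = |a|` and `ξ = 1`, because `t log t → 0` as
`t → 0`; hence both limits are values of the formula, and positivity follows from `H_Q(|a|) = 0`
and strict monotonicity.
-/

open Filter Topology Asymptotics MeasureTheory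

noncomputable section

/-- One step of the (column-decomposition) quantum walk `U` on functions `ℤ → ℂ²`:
`(Uf)(x) = P f(x+1) + Q f(x-1)` with `P = [[a,0],[-conj b,0]]`, `Q = [[0,b],[0,conj a]]`. -/
def qwStep (a b : ℂ) (f : ℤ → ℂ × ℂ) : ℤ → ℂ × ℂ := fun x =>
  (a * (f (x + 1)).1 + b * (f (x - 1)).2,
   -(starRingEnd ℂ) b * (f (x + 1)).1 + (starRingEnd ℂ) a * (f (x - 1)).2)

/-- `δ₀ ⊗ φ : ℤ → ℂ²`. -/
def qwDelta (φ : ℂ × ℂ) : ℤ → ℂ × ℂ := fun x => if x = 0 then φ else 0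

/-- Squared norm of a vector in `ℂ²`. -/
def nsq (u : ℂ × ℂ) : ℝ := ‖u.1‖ ^ 2 + ‖u.2‖ ^ 2

/-- Transition probability `p_n(φ; y) = ‖(Uⁿ(δ₀ ⊗ φ))(y)‖²`. -/
def qwP (a b : ℂ) (φ : ℂ × ℂ) (n : ℕ) (y : ℤ) : ℝ :=
  nsq (((qwStep a b)^[n] (qwDelta φ)) y)

/-- `λ_A(φ) = |φ₂|² − |φ₁|² + (1/|a|²)(ab conj(φ₁)φ₂ + conj(ab) φ₁ conj(φ₂))` (a real number). -/
def lamA (a b : ℂ) (φ : ℂ × ℂ) : ℝ :=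
  ‖φ.2‖ ^ 2 - ‖φ.1‖ ^ 2 +
    (a * b * (starRingEnd ℂ) φ.1 * φ.2 +
      (starRingEnd ℂ) a * (starRingEnd ℂ) b * φ.1 * (starRingEnd ℂ) φ.2).re / ‖a‖ ^ 2

/-- `μ(t) = arccos(|a| cos t)`. -/
def muF (a : ℂ) (t : ℝ) : ℝ := Real.arccos (‖a‖ * Real.cos t)

/-- `t(η) = arcsin(|b|η/(|a|√(1 − η²)))`. -/
def tF (a b : ℂ) (η : ℝ) : ℝ := Real.arcsin (‖b‖ * η / (‖a‖ * Real.sqrt (1 - η ^ 2)))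

/-- `θ(η) = 2μ(t(η)) − 2η t(η)`. -/
def thetaF (a b : ℂ) (η : ℝ) : ℝ := 2 * muF a (tF a b η) - 2 * η * tF a b η

/-- The rate function `H_Q(ξ)` on `|a| < |ξ| < 1`. -/
def HQ (a b : ℂ) (ξ : ℝ) : ℝ :=
  2 * |ξ| * Real.log (‖b‖ * |ξ| + Real.sqrt (ξ ^ 2 - ‖a‖ ^ 2)) -
    2 * Real.log (‖b‖ + Real.sqrt (ξ ^ 2 - ‖a‖ ^ 2)) +
    (1 - |ξ|) * Real.log (1 - ξ ^ 2) - 2 * |ξ| * Real.log ‖a‖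

/-- `ψ_A(ζ) = ζ + (ζ − 1)√((ζ + 1)/(ζ − 1))`, the branch of the square root (principal
complex power) being positive on the positive real axis. -/
def psiA (ζ : ℂ) : ℂ := ζ + (ζ - 1) * ((ζ + 1) / (ζ - 1)) ^ ((1 : ℂ) / 2)

/-- `φ̃(z) = (z + z⁻¹)/2` as a complex function. -/
def phitC (z : ℂ) : ℂ := (z + z⁻¹) / 2

/-- The eigenvalue branch `λ_A(z) = ψ_A(|a| φ̃(z))`, holomorphic on `D_A`. -/
def lamAn (a : ℂ) (z : ℂ) : ℂ := psiA ((‖a‖ : ℂ) * phitC z)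

/-- The domain
`D_A = ℂ ∖ (S¹ ∪ {0} ∪ [−(1+|b|)/|a|, −(1−|b|)/|a|] ∪ [(1−|b|)/|a|, (1+|b|)/|a|])`. -/
def DA (a b : ℂ) : Set ℂ :=
  {z : ℂ | ‖z‖ ≠ 1 ∧ z ≠ 0 ∧
    z ∉ (fun x : ℝ => (x : ℂ)) '' Set.Icc (-((1 + ‖b‖) / ‖a‖)) (-((1 - ‖b‖) / ‖a‖)) ∧
    z ∉ (fun x : ℝ => (x : ℂ)) '' Set.Icc ((1 - ‖b‖) / ‖a‖) ((1 + ‖b‖) / ‖a‖)}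

/-- `r(η) = (|b|η + √(η² − |a|²))/(|a|√(1 − η²))`. -/
def rfun (a b : ℂ) (η : ℝ) : ℝ :=
  (‖b‖ * η + Real.sqrt (η ^ 2 - ‖a‖ ^ 2)) / (‖a‖ * Real.sqrt (1 - η ^ 2))

/-- The function `D(η) = (|b| + √(η² − |a|²))/√(1 − η²)`, which enters the rate function through
`H_Q(η)/2 = |η| log r(|η|) − log D(η)`. -/
def dfun (a b : ℂ) (η : ℝ) : ℝ :=
  (‖b‖ + Real.sqrt (η ^ 2 - ‖a‖ ^ 2)) / Real.sqrt (1 - η ^ 2)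

lemma hasDerivAt_sqrt_sq_sub {c x : ℝ} (h : x ^ 2 - c ≠ 0) :
    HasDerivAt (fun y : ℝ => Real.sqrt (y ^ 2 - c)) (x / Real.sqrt (x ^ 2 - c)) x := by
  have hsq : HasDerivAt (fun y : ℝ => y ^ 2 - c) (2 * x) x := by
    simpa using (hasDerivAt_pow 2 x).sub_const c
  exact (hsq.sqrt h).congr_deriv (mul_div_mul_left _ _ two_ne_zero)

lemma hasDerivAt_log_one_sub_sq {x : ℝ} (h : 1 - x ^ 2 ≠ 0) :
    HasDerivAt (fun y : ℝ => Real.log (1 - y ^ 2)) (-(2 * x) / (1 - x ^ 2)) x := by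
  have hsq : HasDerivAt (fun y : ℝ => 1 - y ^ 2) (-(2 * x)) x := by
    simpa using (hasDerivAt_pow 2 x).const_sub 1
  exact hsq.log h

lemma one_sub_abs_mul_log_one_sub_sq (x : ℝ) :
    (1 - |x|) * Real.log (1 - x ^ 2) =
      (1 - |x|) * Real.log (1 - |x|) + (1 - |x|) * Real.log (1 + |x|) := by
  rcases eq_or_ne (1 - |x|) 0 with h | h
  · simp only [h, zero_mul, add_zero]
  · have h' : 1 + |x| ≠ 0 := by positivity
    rw [← sq_abs x, show 1 - |x| ^ 2 = (1 - |x|) * (1 + |x|) by ring, Real.log_mul h h', mul_add]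

lemma continuous_one_sub_abs_mul_log_one_sub_sq :
    Continuous fun x : ℝ => (1 - |x|) * Real.log (1 - x ^ 2) := by
  simp only [one_sub_abs_mul_log_one_sub_sq]
  have hsub : Continuous fun x : ℝ => (1 - |x|) * Real.log (1 - |x|) :=
    Real.continuous_mul_log.comp (by fun_prop)
  have hadd : ∀ x : ℝ, 1 + |x| ≠ 0 := fun x => by positivity
  exact hsub.add (by fun_prop (disch := assumption))

section RateFunction

variable {a b : ℂ} {x : ℝ}

lemma HQ_neg (a b : ℂ) (ξ : ℝ) : HQ a b (-ξ) = HQ a b ξ := by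
  simp only [HQ, abs_neg, neg_sq]

lemma HQ_abs (a b : ℂ) (ξ : ℝ) : HQ a b |ξ| = HQ a b ξ := by
  simp only [HQ, abs_abs, sq_abs]

lemma HQ_one (a b : ℂ) : HQ a b 1 = -2 * Real.log ‖a‖ := by
  simp [HQ]

lemma HQ_norm (ha : a ≠ 0) (hb : b ≠ 0) (hab : ‖a‖ ^ 2 + ‖b‖ ^ 2 = 1) : HQ a b ‖a‖ = 0 := by
  rw [HQ, abs_norm, sub_self, Real.sqrt_zero, add_zero, add_zero,
    ← eq_sub_of_add_eq' hab, Real.log_pow,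
    Real.log_mul (norm_ne_zero_iff.2 hb) (norm_ne_zero_iff.2 ha)]
  push_cast
  ring

lemma continuousAt_HQ (a : ℂ) (hb : b ≠ 0) (hx : x ≠ 0) : ContinuousAt (HQ a b) x := by
  have hr : ‖b‖ * |x| + Real.sqrt (x ^ 2 - ‖a‖ ^ 2) ≠ 0 := by positivity
  have hd : ‖b‖ + Real.sqrt (x ^ 2 - ‖a‖ ^ 2) ≠ 0 := by positivity
  have hlog := continuous_one_sub_abs_mul_log_one_sub_sq.continuousAt (x := x)
  unfold HQ
  exact ((by fun_prop (disch := assumption) : ContinuousAt _ x).add hlog).sub (by fun_prop)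

lemma one_sub_sq_pos (hx : x ∈ Set.Ioo ‖a‖ 1) : 0 < 1 - x ^ 2 :=
  sub_pos.2 (pow_lt_one₀ ((norm_nonneg a).trans hx.1.le) hx.2 two_ne_zero)

lemma sq_sub_norm_sq_pos (hx : ‖a‖ < x) : 0 < x ^ 2 - ‖a‖ ^ 2 :=
  sub_pos.2 (pow_lt_pow_left₀ hx (norm_nonneg a) two_ne_zero)

lemma log_rfun (ha : a ≠ 0) (b : ℂ) (hx : x ∈ Set.Ioo ‖a‖ 1) :
    Real.log (rfun a b x) = Real.log (‖b‖ * x + Real.sqrt (x ^ 2 - ‖a‖ ^ 2)) -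
      Real.log ‖a‖ - Real.log (1 - x ^ 2) / 2 := by
  have ha₀ : 0 < ‖a‖ := norm_pos_iff.2 ha
  have hx₀ : 0 < x := ha₀.trans hx.1
  have hs := sq_sub_norm_sq_pos hx.1
  have ht := one_sub_sq_pos hx
  have hu := Real.sqrt_pos.2 ht
  rw [rfun, Real.log_div (by positivity) (by positivity), Real.log_mul ha₀.ne' hu.ne',
    Real.log_sqrt ht.le, sub_sub]

lemma log_dfun (b : ℂ) (hx : x ∈ Set.Ioo ‖a‖ 1) :
    Real.log (dfun a b x) =
      Real.log (‖b‖ + Real.sqrt (x ^ 2 - ‖a‖ ^ 2)) - Real.log (1 - x ^ 2) / 2 := by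
  have hs := sq_sub_norm_sq_pos hx.1
  have ht := one_sub_sq_pos hx
  rw [dfun, Real.log_div (by positivity) (Real.sqrt_pos.2 ht).ne', Real.log_sqrt ht.le]

lemma HQ_eq_mul_log_rfun_sub_log_dfun (ha : a ≠ 0) (b : ℂ) (hx : x ∈ Set.Ioo ‖a‖ 1) :
    HQ a b x = 2 * (x * Real.log (rfun a b x) - Real.log (dfun a b x)) := by
  rw [HQ, abs_of_pos ((norm_nonneg a).trans_lt hx.1), log_rfun ha b hx, log_dfun b hx]
  ring

lemma one_lt_rfun (ha : a ≠ 0) (hab : ‖a‖ ^ 2 + ‖b‖ ^ 2 = 1) (hx : x ∈ Set.Ioo ‖a‖ 1) :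
    1 < rfun a b x := by
  have ha₀ : 0 < ‖a‖ := norm_pos_iff.2 ha
  have hx₀ : 0 < x := ha₀.trans hx.1
  have hs := sq_sub_norm_sq_pos hx.1
  have ht := one_sub_sq_pos hx
  have hsq : (‖a‖ * Real.sqrt (1 - x ^ 2)) ^ 2 < (‖b‖ * x) ^ 2 :=
    calc (‖a‖ * Real.sqrt (1 - x ^ 2)) ^ 2 = ‖a‖ ^ 2 * (1 - x ^ 2) := by
          rw [mul_pow, Real.sq_sqrt ht.le]
      _ < ‖a‖ ^ 2 * (1 - x ^ 2) + (x ^ 2 - ‖a‖ ^ 2) := lt_add_of_pos_right _ hs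
      _ = (‖b‖ * x) ^ 2 := by linear_combination (-x ^ 2) * hab
  have hlt : ‖a‖ * Real.sqrt (1 - x ^ 2) < ‖b‖ * x :=
    lt_of_pow_lt_pow_left₀ 2 (by positivity) hsq
  rw [rfun, one_lt_div (mul_pos ha₀ (Real.sqrt_pos.2 ht))]
  exact hlt.trans (lt_add_of_pos_right _ (Real.sqrt_pos.2 hs))

lemma log_rfun_pos (ha : a ≠ 0) (hab : ‖a‖ ^ 2 + ‖b‖ ^ 2 = 1) (hx : x ∈ Set.Ioo ‖a‖ 1) :
    0 < Real.log (rfun a b x) :=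
  Real.log_pos (one_lt_rfun ha hab hx)

lemma hasDerivAt_log_rfun (ha : a ≠ 0) (hab : ‖a‖ ^ 2 + ‖b‖ ^ 2 = 1)
    (hx : x ∈ Set.Ioo ‖a‖ 1) :
    HasDerivAt (fun y => Real.log (rfun a b y))
      (‖b‖ / ((1 - x ^ 2) * Real.sqrt (x ^ 2 - ‖a‖ ^ 2))) x := by
  have hx₀ : 0 < x := (norm_nonneg a).trans_lt hx.1
  have hs := sq_sub_norm_sq_pos hx.1
  have hsq := Real.sq_sqrt hs.le
  have ht := (one_sub_sq_pos hx).ne'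
  have hnum : ‖b‖ * x + Real.sqrt (x ^ 2 - ‖a‖ ^ 2) ≠ 0 := by positivity
  have hlog := (((hasDerivAt_const_mul ‖b‖).add (hasDerivAt_sqrt_sq_sub hs.ne')).log
    hnum).sub_const (Real.log ‖a‖)
  refine ((hlog.sub ((hasDerivAt_log_one_sub_sq ht).div_const 2)).congr_of_eventuallyEq
    ?_).congr_deriv ?_
  · filter_upwards [Ioo_mem_nhds hx.1 hx.2] with y hy using log_rfun ha b hy
  · simp only [Pi.add_apply]
    field_simp
    linear_combination x * hsq - x * hab

lemma hasDerivAt_log_dfun (hab : ‖a‖ ^ 2 + ‖b‖ ^ 2 = 1) (hx : x ∈ Set.Ioo ‖a‖ 1) :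
    HasDerivAt (fun y => Real.log (dfun a b y))
      (x * (‖b‖ / ((1 - x ^ 2) * Real.sqrt (x ^ 2 - ‖a‖ ^ 2)))) x := by
  have hs := sq_sub_norm_sq_pos hx.1
  have hsq := Real.sq_sqrt hs.le
  have ht := (one_sub_sq_pos hx).ne'
  have hnum : ‖b‖ + Real.sqrt (x ^ 2 - ‖a‖ ^ 2) ≠ 0 := by positivity
  have hlog := ((hasDerivAt_sqrt_sq_sub hs.ne').const_add ‖b‖).log hnum
  refine ((hlog.sub ((hasDerivAt_log_one_sub_sq ht).div_const 2)).congr_of_eventuallyEq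
    ?_).congr_deriv ?_
  · filter_upwards [Ioo_mem_nhds hx.1 hx.2] with y hy using log_dfun b hy
  · field_simp
    linear_combination x * hsq - x * hab

lemma hasDerivAt_HQ (ha : a ≠ 0) (hab : ‖a‖ ^ 2 + ‖b‖ ^ 2 = 1) (hx : x ∈ Set.Ioo ‖a‖ 1) :
    HasDerivAt (HQ a b) (2 * Real.log (rfun a b x)) x := by
  have hderiv := (((hasDerivAt_id x).mul (hasDerivAt_log_rfun ha hab hx)).sub
    (hasDerivAt_log_dfun hab hx)).const_mul 2
  refine (hderiv.congr_of_eventuallyEq ?_).congr_deriv ?_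
  · filter_upwards [Ioo_mem_nhds hx.1 hx.2] with y hy
      using HQ_eq_mul_log_rfun_sub_log_dfun ha b hy
  · rw [one_mul, id_eq, add_sub_cancel_right]

lemma hasDerivAt_deriv_HQ (ha : a ≠ 0) (hab : ‖a‖ ^ 2 + ‖b‖ ^ 2 = 1)
    (hx : x ∈ Set.Ioo ‖a‖ 1) :
    HasDerivAt (deriv (HQ a b))
      (2 * ‖b‖ / ((1 - x ^ 2) * Real.sqrt (x ^ 2 - ‖a‖ ^ 2))) x := by
  rw [mul_div_assoc]
  refine ((hasDerivAt_log_rfun ha hab hx).const_mul 2).congr_of_eventuallyEq ?_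
  filter_upwards [Ioo_mem_nhds hx.1 hx.2] with y hy using (hasDerivAt_HQ ha hab hy).deriv

lemma continuousOn_HQ (ha : a ≠ 0) (hb : b ≠ 0) : ContinuousOn (HQ a b) (Set.Icc ‖a‖ 1) :=
  fun _ hx => (continuousAt_HQ a hb ((norm_pos_iff.2 ha).trans_le hx.1).ne').continuousWithinAt

lemma strictMonoOn_HQ (ha : a ≠ 0) (hb : b ≠ 0) (hab : ‖a‖ ^ 2 + ‖b‖ ^ 2 = 1) :
    StrictMonoOn (HQ a b) (Set.Icc ‖a‖ 1) := by
  refine strictMonoOn_of_deriv_pos (convex_Icc _ _) (continuousOn_HQ ha hb) fun x hx => ?_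
  rw [interior_Icc] at hx
  rw [(hasDerivAt_HQ ha hab hx).deriv]
  exact mul_pos two_pos (log_rfun_pos ha hab hx)

lemma strictConvexOn_HQ (ha : a ≠ 0) (hb : b ≠ 0) (hab : ‖a‖ ^ 2 + ‖b‖ ^ 2 = 1) :
    StrictConvexOn ℝ (Set.Icc ‖a‖ 1) (HQ a b) := by
  refine strictConvexOn_of_deriv2_pos (convex_Icc _ _) (continuousOn_HQ ha hb) fun x hx => ?_
  rw [interior_Icc] at hx
  have hs := sq_sub_norm_sq_pos hx.1
  have ht := one_sub_sq_pos hx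
  rw [Function.iterate_succ_apply, Function.iterate_one, (hasDerivAt_deriv_HQ ha hab hx).deriv]
  positivity

lemma HQ_pos (ha : a ≠ 0) (hb : b ≠ 0) (hab : ‖a‖ ^ 2 + ‖b‖ ^ 2 = 1)
    (hx : x ∈ Set.Ioc ‖a‖ 1) : 0 < HQ a b x :=
  calc 0 = HQ a b ‖a‖ := (HQ_norm ha hb hab).symm
    _ < HQ a b x := strictMonoOn_HQ ha hb hab (Set.left_mem_Icc.2 (hx.1.le.trans hx.2))
      (Set.Ioc_subset_Icc_self hx) hx.1

lemma tendsto_HQ_norm (ha : a ≠ 0) (hb : b ≠ 0) (hab : ‖a‖ ^ 2 + ‖b‖ ^ 2 = 1) :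
    Tendsto (HQ a b) (𝓝 ‖a‖) (𝓝 0) := by
  simpa only [HQ_norm ha hb hab] using (continuousAt_HQ a hb (norm_ne_zero_iff.2 ha)).tendsto

lemma tendsto_HQ_one (a : ℂ) (hb : b ≠ 0) :
    Tendsto (HQ a b) (𝓝 1) (𝓝 (-2 * Real.log ‖a‖)) := by
  simpa only [HQ_one] using (continuousAt_HQ a hb one_ne_zero).tendsto

end RateFunction

/-- Lemma `rateQL`: `H_Q` is positive on `{|a| < |ξ| < 1}`, even, convex
there (on `|a| < ξ < 1` one has `(1/2)H_Q″(ξ) = |b|/((1−ξ²)√(ξ²−|a|²)) > 0`), has no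
critical points (`(1/2)H_Q′(ξ) = log r(ξ) > 0` for `|a| < ξ < 1`), and
`H_Q(ξ) → 0` as `|ξ| → |a|⁺`, `H_Q(ξ) → −2 log|a|` as `|ξ| → 1⁻`. -/
theorem stmt19 (a b : ℂ) (hab1 : ‖a‖ ^ 2 + ‖b‖ ^ 2 = 1) (hab : a * b ≠ 0) :
    (∀ ξ : ℝ, ‖a‖ < |ξ| → |ξ| < 1 → 0 < HQ a b ξ) ∧
    (∀ ξ : ℝ, HQ a b (-ξ) = HQ a b ξ) ∧
    ConvexOn ℝ (Set.Ioo ‖a‖ 1) (HQ a b) ∧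
    (∀ ξ : ℝ, ‖a‖ < ξ → ξ < 1 →
      deriv (HQ a b) ξ = 2 * Real.log (rfun a b ξ) ∧
      0 < Real.log (rfun a b ξ) ∧
      deriv (deriv (HQ a b)) ξ = 2 * ‖b‖ / ((1 - ξ ^ 2) * Real.sqrt (ξ ^ 2 - ‖a‖ ^ 2))) ∧
    Tendsto (HQ a b) (𝓝[>] ‖a‖) (𝓝 0) ∧
    Tendsto (HQ a b) (𝓝[<] 1) (𝓝 (-2 * Real.log ‖a‖)) := by
  have ha : a ≠ 0 := left_ne_zero_of_mul hab
  have hb : b ≠ 0 := right_ne_zero_of_mul hab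
  refine ⟨fun ξ h h1 => ?_, HQ_neg a b, ?_, fun ξ h h1 => ⟨?_, ?_, ?_⟩, ?_, ?_⟩
  · rw [← HQ_abs]
    exact HQ_pos ha hb hab1 ⟨h, h1.le⟩
  · exact (strictConvexOn_HQ ha hb hab1).convexOn.subset Set.Ioo_subset_Icc_self (convex_Ioo _ _)
  · exact (hasDerivAt_HQ ha hab1 ⟨h, h1⟩).deriv
  · exact log_rfun_pos ha hab1 ⟨h, h1⟩
  · exact (hasDerivAt_deriv_HQ ha hab1 ⟨h, h1⟩).deriv
  · exact (tendsto_HQ_norm ha hb hab1).mono_left nhdsWithin_le_nhds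
  · exact (tendsto_HQ_one a hb).mono_left nhdsWithin_le_nhds
end
end
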